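/- arXiv:0808.2748 — 4 statements merged into one kernel-verified Lean document; each statement's English description precedes it below -/
import Mathlib

section
/- Let a0, a1, a2, b0 be real numbers with a2 > 0 and 4*a0*a2 - a1^2 > 0, and let a0' = (a0 - a1 + a2)*(a0 + a1 + a2), a1' = 2*a1*(a0 - a2), a2' = 4*a0*a2, b0' = 2*b0*(a0 + a2). Then ∫_{-∞}^{∞} b0' / (a0' + a1'*x + a2'*x^2) dx = ∫_{-∞}^{∞} b0 / (a0 + a1*x + a2*x^2) dx. -/
open MeasureTheory

/-!
Completing the square evaluates the integral of `d / (c + b * x + a * x ^ 2)` in closed form, as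
`2 * π * sign a * d / √(-discrim a b c)`. The Landen transformation multiplies the numerator by
`2 * (a0 + a2)` and the discriminant by the square of that factor. The new leading coefficient
`4 * a0 * a2` is always positive, so the sign of `a2` is lost there, but it reappears as the sign of
`a0 + a2`.
-/

theorem integral_comp_mul_add {F : Type*} [NormedAddCommGroup F] [NormedSpace ℝ F]
    (g : ℝ → F) (a b : ℝ) : ∫ x, g (a * x + b) = |a⁻¹| • ∫ y, g y := by
  rw [Measure.integral_comp_mul_left (fun y ↦ g (y + b)) a, integral_add_right_eq_self]

theorem four_mul_mul_quadratic {R : Type*} [CommRing R] (a b c x : R) :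
    4 * a * (c + b * x + a * x ^ 2) = (2 * a * x + b) ^ 2 - discrim a b c := by
  simp only [discrim]
  ring

theorem mul_pos_of_discrim_neg {R : Type*} [CommRing R] [LinearOrder R] [IsStrictOrderedRing R]
    {a b c : R} (h : discrim a b c < 0) : 0 < a * c := by
  simp only [discrim] at h
  nlinarith [sq_nonneg b]

theorem integral_div_quadratic {a b c : ℝ} (d : ℝ) (h : discrim a b c < 0) :
    ∫ x, d / (c + b * x + a * x ^ 2) =
      2 * Real.pi * SignType.sign a * d / √(-discrim a b c) := by
  set s := √(-discrim a b c)
  have s_pos : 0 < s := Real.sqrt_pos.2 (neg_pos.2 h)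
  have s_sq : s ^ 2 = -discrim a b c := Real.sq_sqrt (neg_pos.2 h).le
  have ha : a ≠ 0 := left_ne_zero_of_mul (mul_pos_of_discrim_neg h).ne'
  have complete_square (x : ℝ) : c + b * x + a * x ^ 2 =
      s ^ 2 / (4 * a) * (1 + (2 * a / s * x + b / s) ^ 2) := by
    field_simp
    linear_combination four_mul_mul_quadratic a b c x - s_sq
  calc ∫ x, d / (c + b * x + a * x ^ 2)
      = ∫ x, d * (4 * a) / s ^ 2 * (1 + (2 * a / s * x + b / s) ^ 2)⁻¹ := by
        congr with x
        rw [complete_square]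
        field_simp
    _ = d * (4 * a) / s ^ 2 * (|(2 * a / s)⁻¹| * Real.pi) := by
        rw [integral_const_mul, integral_comp_mul_add (fun y : ℝ ↦ (1 + y ^ 2)⁻¹),
          integral_univ_inv_one_add_sq, smul_eq_mul]
    _ = 2 * Real.pi * SignType.sign a * d / s := by
        rw [inv_div, abs_div, abs_mul, abs_of_pos s_pos, abs_two]
        have abs_a_ne_zero : |a| ≠ 0 := abs_ne_zero.2 ha
        field_simp
        linear_combination -4 * d * sign_mul_abs a

theorem discrim_landen {R : Type*} [CommRing R] (a0 a1 a2 : R) :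
    discrim (4 * a0 * a2) (2 * a1 * (a0 - a2)) ((a0 - a1 + a2) * (a0 + a1 + a2)) =
      (2 * (a0 + a2)) ^ 2 * discrim a2 a1 a0 := by
  simp only [discrim]
  ring

theorem sqrt_neg_discrim_landen (a0 a1 a2 : ℝ) :
    √(-discrim (4 * a0 * a2) (2 * a1 * (a0 - a2)) ((a0 - a1 + a2) * (a0 + a1 + a2))) =
      2 * |a0 + a2| * √(-discrim a2 a1 a0) := by
  rw [discrim_landen, ← mul_neg, Real.sqrt_mul (sq_nonneg _), Real.sqrt_sq_eq_abs, abs_mul,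
    abs_two]

theorem sign_add_of_mul_pos {R : Type*} [Ring R] [LinearOrder R] [IsStrictOrderedRing R] {a b : R}
    (h : 0 < a * b) : SignType.sign (a + b) = SignType.sign b := by
  rcases pos_and_pos_or_neg_and_neg_of_mul_pos h with ⟨ha, hb⟩ | ⟨ha, hb⟩
  · rw [sign_pos (add_pos ha hb), sign_pos hb]
  · rw [sign_neg (add_neg ha hb), sign_neg hb]

theorem landen_order2_quadratic_invariance_general
    (a0 a1 a2 b0 : ℝ) (hdisc : 4 * a0 * a2 - a1 ^ 2 > 0) :
    ∫ x : ℝ, (2 * b0 * (a0 + a2)) /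
        ((a0 - a1 + a2) * (a0 + a1 + a2) + (2 * a1 * (a0 - a2)) * x
          + (4 * a0 * a2) * x ^ 2)
      = ∫ x : ℝ, b0 / (a0 + a1 * x + a2 * x ^ 2) := by
  have hneg : discrim a2 a1 a0 < 0 := by
    simp only [discrim]
    linarith
  have hprod : 0 < a0 * a2 := mul_comm a2 a0 ▸ mul_pos_of_discrim_neg hneg
  have hsign : SignType.sign (a0 + a2) = SignType.sign a2 := sign_add_of_mul_pos hprod
  have hsum : a0 + a2 ≠ 0 := by
    rw [← sign_ne_zero, hsign, sign_ne_zero]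
    exact right_ne_zero_of_mul hprod.ne'
  have landen_discrim_neg : discrim (4 * a0 * a2) (2 * a1 * (a0 - a2))
      ((a0 - a1 + a2) * (a0 + a1 + a2)) < 0 := by
    rw [discrim_landen]
    exact mul_neg_of_pos_of_neg (by positivity) hneg
  have landen_sign : SignType.sign (4 * a0 * a2) = 1 := sign_pos (by linarith)
  rw [integral_div_quadratic _ landen_discrim_neg, integral_div_quadratic _ hneg,
    sqrt_neg_discrim_landen, landen_sign, ← hsign, SignType.coe_one]
  have sqrt_ne_zero : √(-discrim a2 a1 a0) ≠ 0 := (Real.sqrt_pos.2 (neg_pos.2 hneg)).ne'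
  have abs_sum_ne_zero : |a0 + a2| ≠ 0 := abs_ne_zero.2 hsum
  field_simp
  linear_combination -b0 * sign_mul_abs (a0 + a2)

theorem landen_order2_quadratic_invariance
    (a0 a1 a2 b0 : ℝ) (ha2 : a2 > 0) (hdisc : 4 * a0 * a2 - a1 ^ 2 > 0) :
    ∫ x : ℝ, (2 * b0 * (a0 + a2)) /
        ((a0 - a1 + a2) * (a0 + a1 + a2) + (2 * a1 * (a0 - a2)) * x
          + (4 * a0 * a2) * x ^ 2)
      = ∫ x : ℝ, b0 / (a0 + a1 * x + a2 * x ^ 2) :=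
  landen_order2_quadratic_invariance_general a0 a1 a2 b0 hdisc
end

section
/- Let a0, a1, a2, b0 be real numbers with a2 > 0, b0 > 0 and 4*a0*a2 - a1^2 > 0. Define sequences by (a_{0,0}, a_{1,0}, a_{2,0}, b_{0,0}) = (a0, a1, a2, b0) and a_{0,n+1} = (a_{0,n} - a_{1,n} + a_{2,n})*(a_{0,n} + a_{1,n} + a_{2,n}), a_{1,n+1} = 2*a_{1,n}*(a_{0,n} - a_{2,n}), a_{2,n+1} = 4*a_{0,n}*a_{2,n}, b_{0,n+1} = 2*b_{0,n}*(a_{0,n} + a_{2,n}). Set L = sqrt(4*a0*a2 - a1^2)/(2*b0). Then, as n → ∞, a_{0,n}/b_{0,n} → L, a_{1,n}/b_{0,n} → 0, and a_{2,n}/b_{0,n} → L; consequently π*b_{0,n}/a_{0,n} converges to ∫_{-∞}^{∞} b0/(a0 + a1*x + a2*x^2) dx. -/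
open MeasureTheory Filter Real

/-!
Up to the factor `2 * s`, Heron's step `s ↦ (s ^ 2 + c ^ 2) / (2 * s)` squares both `s - c` and
`s + c`. So it squares `(s - c) / (s + c)`, and it converges to `c` (quadratically) as soon as
this ratio has norm less than one.

Along a Landen orbit `(4 * a₀ * a₂ - a₁ ^ 2) / b ^ 2` is constant, equal to `(2 * L) ^ 2` say, and
`(a₀ + a₂) / b` undergoes Heron's iteration for `c = 2 * L`. Finally
`((a₀ - a₂) / b) ^ 2 + (a₁ / b) ^ 2 = ((a₀ + a₂) / b) ^ 2 - (2 * L) ^ 2` tends to zero, so both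
squares on the left do.
-/

section Heron

variable {𝕜 : Type*} [NormedField 𝕜] {s : ℕ → 𝕜} {c : 𝕜}

lemma two_mul_ne_zero_of_norm_sub_lt_norm_add {x y : 𝕜} (h : ‖x - y‖ < ‖x + y‖) : 2 * x ≠ 0 := by
  intro hx
  have hneg : x + y = -(x - y) := by linear_combination hx
  rw [hneg, norm_neg] at h
  exact h.false

lemma heron_sub {x : 𝕜} (hx : 2 * x ≠ 0) (c : 𝕜) :
    (x ^ 2 + c ^ 2) / (2 * x) - c = (x - c) ^ 2 / (2 * x) := by
  rw [div_sub' hx]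
  ring

lemma heron_add {x : 𝕜} (hx : 2 * x ≠ 0) (c : 𝕜) :
    (x ^ 2 + c ^ 2) / (2 * x) + c = (x + c) ^ 2 / (2 * x) := by
  rw [div_add' _ _ _ hx]
  ring

lemma norm_sub_lt_norm_add_of_heron (h₀ : ‖s 0 - c‖ < ‖s 0 + c‖)
    (hs : ∀ n, s (n + 1) = (s n ^ 2 + c ^ 2) / (2 * s n)) (n : ℕ) : ‖s n - c‖ < ‖s n + c‖ := by
  induction n with
  | zero => exact h₀
  | succ n ih =>
    have h2s := two_mul_ne_zero_of_norm_sub_lt_norm_add ih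
    have : 0 < ‖2 * s n‖ := norm_pos_iff.mpr h2s
    rw [hs, heron_sub h2s, heron_add h2s, norm_div, norm_div, norm_pow, norm_pow]
    gcongr

lemma sub_div_add_eq_pow_of_heron (h₀ : ‖s 0 - c‖ < ‖s 0 + c‖)
    (hs : ∀ n, s (n + 1) = (s n ^ 2 + c ^ 2) / (2 * s n)) (n : ℕ) :
    (s n - c) / (s n + c) = ((s 0 - c) / (s 0 + c)) ^ 2 ^ n := by
  induction n with
  | zero => simp
  | succ n ih =>
    have h2s := two_mul_ne_zero_of_norm_sub_lt_norm_add (norm_sub_lt_norm_add_of_heron h₀ hs n)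
    rw [hs, heron_sub h2s, heron_add h2s, div_div_div_cancel_right₀ h2s, ← div_pow, ih, ← pow_mul,
      pow_succ]

theorem tendsto_of_heron (h₀ : ‖s 0 - c‖ < ‖s 0 + c‖)
    (hs : ∀ n, s (n + 1) = (s n ^ 2 + c ^ 2) / (2 * s n)) : Tendsto s atTop (nhds c) := by
  have hratio : Tendsto (fun n ↦ (s n - c) / (s n + c)) atTop (nhds 0) := by
    have hlt : ‖(s 0 - c) / (s 0 + c)‖ < 1 := by
      rw [norm_div]
      exact (div_lt_one ((norm_nonneg _).trans_lt h₀)).mpr h₀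
    exact ((tendsto_pow_atTop_nhds_zero_of_norm_lt_one hlt).comp
      (tendsto_pow_atTop_atTop_of_one_lt (one_lt_two : 1 < (2 : ℕ)))).congr
      fun n ↦ (sub_div_add_eq_pow_of_heron h₀ hs n).symm
  have hinv (n : ℕ) :
      c * (1 + (s n - c) / (s n + c)) / (1 - (s n - c) / (s n + c)) = s n := by
    have hlt := norm_sub_lt_norm_add_of_heron h₀ hs n
    have hadd : s n + c ≠ 0 := norm_pos_iff.mp ((norm_nonneg _).trans_lt hlt)
    have h2c : 2 * c ≠ 0 := by
      rw [norm_sub_rev, add_comm] at hlt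
      exact two_mul_ne_zero_of_norm_sub_lt_norm_add hlt
    have hnum : 1 + (s n - c) / (s n + c) = 2 * s n / (s n + c) := by field_simp; ring
    have hden : 1 - (s n - c) / (s n + c) = 2 * c / (s n + c) := by field_simp; ring
    rw [hnum, hden, ← mul_div_assoc, div_div_div_cancel_right₀ hadd, div_eq_iff h2c]
    ring
  have hlim := ((hratio.const_add 1).const_mul c).div (hratio.const_sub 1) (by simp)
  rw [add_zero, sub_zero, mul_one, div_one] at hlim
  exact hlim.congr hinv

end Heron

lemma tendsto_zero_of_sq_add_sq {ι : Type*} {l : Filter ι} {u v : ι → ℝ}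
    (h : Tendsto (fun i ↦ u i ^ 2 + v i ^ 2) l (nhds 0)) : Tendsto u l (nhds 0) := by
  have hsqrt : Tendsto (fun i ↦ √(u i ^ 2 + v i ^ 2)) l (nhds 0) := by simpa using h.sqrt
  exact squeeze_zero_norm (fun i ↦ Real.abs_le_sqrt (le_add_of_nonneg_right (sq_nonneg _))) hsqrt

lemma sq_sign_of_ne_zero {x : ℝ} (hx : x ≠ 0) : Real.sign x ^ 2 = 1 := by
  rcases Real.sign_apply_eq_of_ne_zero x hx with h | h <;> norm_num [h]

lemma sign_mul_add_pos {a₀ a₁ a₂ : ℝ} (h : 0 < 4 * a₀ * a₂ - a₁ ^ 2) :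
    0 < Real.sign a₂ * (a₀ + a₂) := by
  have hmul : 0 < a₀ * a₂ := by linarith [sq_nonneg a₁]
  rcases mul_pos_iff.mp hmul with ⟨h₀, h₂⟩ | ⟨h₀, h₂⟩
  · rw [Real.sign_of_pos h₂]
    linarith
  · rw [Real.sign_of_neg h₂]
    linarith

theorem integral_inv_quadratic {a₀ a₁ a₂ : ℝ} (h : 0 < 4 * a₀ * a₂ - a₁ ^ 2) :
    ∫ x : ℝ, (a₀ + a₁ * x + a₂ * x ^ 2)⁻¹ =
      Real.sign a₂ * (2 * π / √(4 * a₀ * a₂ - a₁ ^ 2)) := by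
  set r := √(4 * a₀ * a₂ - a₁ ^ 2)
  have hr : 0 < r := Real.sqrt_pos.mpr h
  have hr_sq : r ^ 2 = 4 * a₀ * a₂ - a₁ ^ 2 := Real.sq_sqrt h.le
  have ha₂ : a₂ ≠ 0 := by
    rintro rfl
    linarith [sq_nonneg a₁]
  have complete_square (x : ℝ) : (a₀ + a₁ * x + a₂ * x ^ 2)⁻¹ =
      4 * a₂ / r ^ 2 * (1 + (2 * a₂ / r * x + a₁ / r) ^ 2)⁻¹ := by
    rw [← inv_inv (4 * a₂ / r ^ 2), ← mul_inv]
    congr 1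
    field_simp
    rw [hr_sq]
    ring
  calc ∫ x : ℝ, (a₀ + a₁ * x + a₂ * x ^ 2)⁻¹
    _ = 4 * a₂ / r ^ 2 * (|(2 * a₂ / r)⁻¹| * π) := by
      simp_rw [complete_square]
      rw [integral_const_mul,
        Measure.integral_comp_mul_left (fun y : ℝ ↦ (1 + (y + a₁ / r) ^ 2)⁻¹),
        integral_add_right_eq_self (fun y : ℝ ↦ (1 + y ^ 2)⁻¹), integral_univ_inv_one_add_sq,
        smul_eq_mul]
    _ = Real.sign a₂ * (2 * π / r) := by
      rw [abs_inv, abs_div, abs_mul, abs_two, abs_of_pos hr]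
      rcases ha₂.lt_or_gt with hneg | hpos
      · rw [Real.sign_of_neg hneg, abs_of_neg hneg]
        field_simp
        ring
      · rw [Real.sign_of_pos hpos, abs_of_pos hpos]
        field_simp
        ring

/-- The sequences of coefficients of the integrands `b n / (a₀ n + a₁ n * x + a₂ n * x ^ 2)`
obtained by iterating the rational Landen transformation of order two. -/
structure IsLandenOrbit {R : Type*} [CommRing R] (a₀ a₁ a₂ b : ℕ → R) : Prop where
  a₀_succ (n : ℕ) : a₀ (n + 1) = (a₀ n - a₁ n + a₂ n) * (a₀ n + a₁ n + a₂ n)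
  a₁_succ (n : ℕ) : a₁ (n + 1) = 2 * a₁ n * (a₀ n - a₂ n)
  a₂_succ (n : ℕ) : a₂ (n + 1) = 4 * a₀ n * a₂ n
  b_succ (n : ℕ) : b (n + 1) = 2 * b n * (a₀ n + a₂ n)

namespace IsLandenOrbit

section CommRing

variable {R : Type*} [CommRing R] {a₀ a₁ a₂ b : ℕ → R} {c : R}

lemma four_mul_mul_sub_sq_eq (h : IsLandenOrbit a₀ a₁ a₂ b)
    (hc : 4 * a₀ 0 * a₂ 0 - a₁ 0 ^ 2 = (c * b 0) ^ 2) (n : ℕ) :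
    4 * a₀ n * a₂ n - a₁ n ^ 2 = (c * b n) ^ 2 := by
  induction n with
  | zero => exact hc
  | succ n ih =>
    rw [h.a₀_succ, h.a₁_succ, h.a₂_succ, h.b_succ]
    linear_combination (2 * (a₀ n + a₂ n)) ^ 2 * ih

lemma sq_add_sq_eq (h : IsLandenOrbit a₀ a₁ a₂ b)
    (hc : 4 * a₀ 0 * a₂ 0 - a₁ 0 ^ 2 = (c * b 0) ^ 2) (n : ℕ) :
    (a₀ n - a₂ n) ^ 2 + a₁ n ^ 2 = (a₀ n + a₂ n) ^ 2 - (c * b n) ^ 2 := by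
  linear_combination -h.four_mul_mul_sub_sq_eq hc n

end CommRing

lemma add_div_succ {K : Type*} [Field K] {a₀ a₁ a₂ b : ℕ → K} {c : K}
    (h : IsLandenOrbit a₀ a₁ a₂ b) (hc : 4 * a₀ 0 * a₂ 0 - a₁ 0 ^ 2 = (c * b 0) ^ 2) {n : ℕ}
    (hb : b n ≠ 0) :
    (a₀ (n + 1) + a₂ (n + 1)) / b (n + 1) =
      (((a₀ n + a₂ n) / b n) ^ 2 + c ^ 2) / (2 * ((a₀ n + a₂ n) / b n)) := by
  have hadd : a₀ (n + 1) + a₂ (n + 1) = (a₀ n + a₂ n) ^ 2 + (c * b n) ^ 2 := by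
    rw [h.a₀_succ, h.a₂_succ]
    linear_combination h.four_mul_mul_sub_sq_eq hc n
  rw [hadd, h.b_succ]
  field_simp

section Real

variable {a₀ a₁ a₂ b : ℕ → ℝ} {c : ℝ}

lemma b_ne_zero (h : IsLandenOrbit a₀ a₁ a₂ b)
    (hc : 4 * a₀ 0 * a₂ 0 - a₁ 0 ^ 2 = (c * b 0) ^ 2) (hc₀ : c ≠ 0) (hb : b 0 ≠ 0) (n : ℕ) :
    b n ≠ 0 := by
  induction n with
  | zero => exact hb
  | succ n ih =>
    have hadd_sq : 0 < (a₀ n + a₂ n) ^ 2 := by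
      have : 0 < (c * b n) ^ 2 := by positivity
      linarith [h.sq_add_sq_eq hc n, sq_nonneg (a₀ n - a₂ n), sq_nonneg (a₁ n)]
    rw [h.b_succ]
    exact mul_ne_zero (mul_ne_zero two_ne_zero ih) (sq_pos_iff.mp hadd_sq)

lemma tendsto_add_div (h : IsLandenOrbit a₀ a₁ a₂ b)
    (hc : 4 * a₀ 0 * a₂ 0 - a₁ 0 ^ 2 = (c * b 0) ^ 2)
    (hpos : 0 < c * ((a₀ 0 + a₂ 0) / b 0)) :
    Tendsto (fun n ↦ (a₀ n + a₂ n) / b n) atTop (nhds c) := by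
  have hb₀ : b 0 ≠ 0 := fun hb ↦ by simp [hb] at hpos
  refine tendsto_of_heron ?_ fun n ↦ h.add_div_succ hc (h.b_ne_zero hc ?_ hb₀ n)
  · rw [Real.norm_eq_abs, Real.norm_eq_abs, ← sq_lt_sq]
    linarith
  · exact left_ne_zero_of_mul hpos.ne'

lemma tendsto_sq_add_sq_div (h : IsLandenOrbit a₀ a₁ a₂ b)
    (hc : 4 * a₀ 0 * a₂ 0 - a₁ 0 ^ 2 = (c * b 0) ^ 2)
    (hpos : 0 < c * ((a₀ 0 + a₂ 0) / b 0)) :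
    Tendsto (fun n ↦ ((a₀ n - a₂ n) / b n) ^ 2 + (a₁ n / b n) ^ 2) atTop (nhds 0) := by
  have hb₀ : b 0 ≠ 0 := fun hb ↦ by simp [hb] at hpos
  have hsum := ((h.tendsto_add_div hc hpos).pow 2).sub_const (c ^ 2)
  rw [sub_self] at hsum
  refine hsum.congr fun n ↦ ?_
  have hb := h.b_ne_zero hc (left_ne_zero_of_mul hpos.ne') hb₀ n
  rw [div_pow, div_pow, div_pow, ← add_div, h.sq_add_sq_eq hc]
  field_simp

lemma tendsto_a₁_div (h : IsLandenOrbit a₀ a₁ a₂ b)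
    (hc : 4 * a₀ 0 * a₂ 0 - a₁ 0 ^ 2 = (c * b 0) ^ 2)
    (hpos : 0 < c * ((a₀ 0 + a₂ 0) / b 0)) :
    Tendsto (fun n ↦ a₁ n / b n) atTop (nhds 0) := by
  refine tendsto_zero_of_sq_add_sq (v := fun n ↦ (a₀ n - a₂ n) / b n) ?_
  simpa only [add_comm] using h.tendsto_sq_add_sq_div hc hpos

lemma tendsto_a₀_div (h : IsLandenOrbit a₀ a₁ a₂ b)
    (hc : 4 * a₀ 0 * a₂ 0 - a₁ 0 ^ 2 = (c * b 0) ^ 2)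
    (hpos : 0 < c * ((a₀ 0 + a₂ 0) / b 0)) :
    Tendsto (fun n ↦ a₀ n / b n) atTop (nhds (c / 2)) := by
  have hsub := tendsto_zero_of_sq_add_sq (h.tendsto_sq_add_sq_div hc hpos)
  have hhalf := ((h.tendsto_add_div hc hpos).add hsub).div_const 2
  rw [add_zero] at hhalf
  exact hhalf.congr fun n ↦ by ring

lemma tendsto_a₂_div (h : IsLandenOrbit a₀ a₁ a₂ b)
    (hc : 4 * a₀ 0 * a₂ 0 - a₁ 0 ^ 2 = (c * b 0) ^ 2)
    (hpos : 0 < c * ((a₀ 0 + a₂ 0) / b 0)) :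
    Tendsto (fun n ↦ a₂ n / b n) atTop (nhds (c / 2)) := by
  have hsub := tendsto_zero_of_sq_add_sq (h.tendsto_sq_add_sq_div hc hpos)
  have hhalf := ((h.tendsto_add_div hc hpos).sub hsub).div_const 2
  rw [sub_zero] at hhalf
  exact hhalf.congr fun n ↦ by ring

end Real

end IsLandenOrbit

theorem landen_order2_quadratic_convergence_general {a₀ a₁ a₂ b : ℕ → ℝ}
    (h : IsLandenOrbit a₀ a₁ a₂ b) (hb : b 0 ≠ 0) (hdisc : 0 < 4 * a₀ 0 * a₂ 0 - a₁ 0 ^ 2) {L : ℝ}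
    (hL : L = Real.sign (a₂ 0) * √(4 * a₀ 0 * a₂ 0 - a₁ 0 ^ 2) / (2 * b 0)) :
    Tendsto (fun n ↦ a₀ n / b n) atTop (nhds L) ∧
    Tendsto (fun n ↦ a₁ n / b n) atTop (nhds 0) ∧
    Tendsto (fun n ↦ a₂ n / b n) atTop (nhds L) ∧
    Tendsto (fun n ↦ π * b n / a₀ n) atTop
      (nhds (∫ x : ℝ, b 0 / (a₀ 0 + a₁ 0 * x + a₂ 0 * x ^ 2))) := by
  set r := √(4 * a₀ 0 * a₂ 0 - a₁ 0 ^ 2)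
  have hr : 0 < r := Real.sqrt_pos.mpr hdisc
  have hsign := sign_mul_add_pos hdisc
  have hsign_ne : Real.sign (a₂ 0) ≠ 0 := left_ne_zero_of_mul hsign.ne'
  have hsign_sq := sq_sign_of_ne_zero (Real.sign_eq_zero_iff.not.mp hsign_ne)
  have hc : 4 * a₀ 0 * a₂ 0 - a₁ 0 ^ 2 = (2 * L * b 0) ^ 2 := by
    calc 4 * a₀ 0 * a₂ 0 - a₁ 0 ^ 2
      _ = (Real.sign (a₂ 0) * r) ^ 2 := by rw [mul_pow, hsign_sq, one_mul, Real.sq_sqrt hdisc.le]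
      _ = (2 * L * b 0) ^ 2 := by rw [hL]; field_simp
  have hpos : 0 < 2 * L * ((a₀ 0 + a₂ 0) / b 0) := by
    calc 0
      _ < r * (Real.sign (a₂ 0) * (a₀ 0 + a₂ 0)) / b 0 ^ 2 := by positivity
      _ = 2 * L * ((a₀ 0 + a₂ 0) / b 0) := by rw [hL]; field_simp
  have hhalf : 2 * L / 2 = L := mul_div_cancel_left₀ L two_ne_zero
  have ha₀ := hhalf ▸ h.tendsto_a₀_div hc hpos
  refine ⟨ha₀, h.tendsto_a₁_div hc hpos, hhalf ▸ h.tendsto_a₂_div hc hpos, ?_⟩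
  have hL₀ : L ≠ 0 := right_ne_zero_of_mul (left_ne_zero_of_mul hpos.ne')
  have hintegral : ∫ x : ℝ, b 0 / (a₀ 0 + a₁ 0 * x + a₂ 0 * x ^ 2) = π * L⁻¹ := by
    simp_rw [div_eq_mul_inv]
    rw [integral_const_mul, integral_inv_quadratic hdisc, hL]
    field_simp
    rw [hsign_sq, one_mul]
  rw [hintegral]
  exact ((ha₀.inv₀ hL₀).const_mul π).congr fun n ↦ by rw [inv_div, mul_div_assoc]

theorem landen_order2_quadratic_convergence
    (a0 a1 a2 b0 : ℝ) (ha2 : a2 > 0) (hb0 : b0 > 0)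
    (hdisc : 4 * a0 * a2 - a1 ^ 2 > 0)
    (A0 A1 A2 B0 : ℕ → ℝ)
    (hA0 : A0 0 = a0) (hA1 : A1 0 = a1) (hA2 : A2 0 = a2) (hB0 : B0 0 = b0)
    (hrec0 : ∀ n, A0 (n + 1) = (A0 n - A1 n + A2 n) * (A0 n + A1 n + A2 n))
    (hrec1 : ∀ n, A1 (n + 1) = 2 * A1 n * (A0 n - A2 n))
    (hrec2 : ∀ n, A2 (n + 1) = 4 * A0 n * A2 n)
    (hrec3 : ∀ n, B0 (n + 1) = 2 * B0 n * (A0 n + A2 n))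
    (L : ℝ) (hL : L = Real.sqrt (4 * a0 * a2 - a1 ^ 2) / (2 * b0)) :
    Tendsto (fun n => A0 n / B0 n) atTop (nhds L) ∧
    Tendsto (fun n => A1 n / B0 n) atTop (nhds 0) ∧
    Tendsto (fun n => A2 n / B0 n) atTop (nhds L) ∧
    Tendsto (fun n => π * B0 n / A0 n) atTop
      (nhds (∫ x : ℝ, b0 / (a0 + a1 * x + a2 * x ^ 2))) := by
  subst hA0 hA1 hA2 hB0
  exact landen_order2_quadratic_convergence_general ⟨hrec0, hrec1, hrec2, hrec3⟩ hb0.ne' hdisc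
    (by rw [hL, Real.sign_of_pos ha2, one_mul])
end

section
/- ∫_{-∞}^{∞} 4*(2x^2 + 6x + 15) / (208x^4 + 456x^3 + 600x^2 + 396x + 171) dx = ∫_{-∞}^{∞} 1/(x^4 + 6x^3 + 16x^2 + 21x + 13) dx. -/
open MeasureTheory

/-! For every `y`, the map `x ↦ (x - x⁻¹) / 2` has two preimages `y ± √(1 + y ^ 2)`, the roots of
`z ^ 2 = 2 * y * z + 1`, one on each half-line. Substituting each branch in the integral over its
half-line and adding preserves `∫ f`. For `f = 1 / D` with `D` a polynomial, dividing `D` by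
`z ^ 2 - 2 * y * z - 1` makes it affine at both roots, so the sum over the branches is a symmetric
function of the roots and therefore rational in `y`. -/

section LandenTransform

variable {E : Type*} [NormedAddCommGroup E] [NormedSpace ℝ E]

/-- The Landen transform of order 2: the sum of `f` over the two preimages `y ± √(1 + y ^ 2)` of `y`
under `x ↦ (x - x⁻¹) / 2`, each weighted by the derivative of the corresponding inverse branch. -/
noncomputable def landenTransform (f : ℝ → E) (y : ℝ) : E :=
  (1 + y / √(1 + y ^ 2)) • f (y + √(1 + y ^ 2)) + (1 - y / √(1 + y ^ 2)) • f (y - √(1 + y ^ 2))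

theorem range_add_sqrt_one_add_sq : Set.range (fun y : ℝ ↦ y + √(1 + y ^ 2)) = Set.Ioi 0 := by
  simp only [← Real.exp_arsinh]
  exact (Real.arsinh_surjective.range_comp Real.exp).trans Real.range_exp

theorem strictMono_add_sqrt_one_add_sq : StrictMono (fun y : ℝ ↦ y + √(1 + y ^ 2)) := by
  simp only [← Real.exp_arsinh]
  exact Real.exp_strictMono.comp Real.arsinh_strictMono

theorem hasDerivAt_add_sqrt_one_add_sq (y : ℝ) :
    HasDerivAt (fun y : ℝ ↦ y + √(1 + y ^ 2)) (1 + y / √(1 + y ^ 2)) y := by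
  have hsq : HasDerivAt (fun y : ℝ ↦ 1 + y ^ 2) (2 * y) y := by
    simpa using (hasDerivAt_pow 2 y).const_add 1
  simpa only [mul_div_mul_left y _ (two_ne_zero' ℝ)] using
    (hasDerivAt_id' y).fun_add (hsq.sqrt (by positivity))

theorem integrable_smul_comp_add_sqrt_iff (f : ℝ → E) :
    Integrable (fun y ↦ (1 + y / √(1 + y ^ 2)) • f (y + √(1 + y ^ 2))) ↔
      IntegrableOn f (Set.Ioi 0) := by
  rw [← range_add_sqrt_one_add_sq, ← Set.image_univ, ← integrableOn_univ]
  exact (integrableOn_image_iff_integrableOn_deriv_smul_of_monotoneOn MeasurableSet.univ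
    (fun y _ ↦ (hasDerivAt_add_sqrt_one_add_sq y).hasDerivWithinAt)
    (strictMono_add_sqrt_one_add_sq.monotone.monotoneOn _) f).symm

theorem integral_smul_comp_add_sqrt (f : ℝ → E) :
    ∫ y, (1 + y / √(1 + y ^ 2)) • f (y + √(1 + y ^ 2)) = ∫ x in Set.Ioi 0, f x := by
  rw [← range_add_sqrt_one_add_sq, ← Set.image_univ, ← setIntegral_univ]
  exact (integral_image_eq_integral_deriv_smul_of_monotoneOn MeasurableSet.univ
    (fun y _ ↦ (hasDerivAt_add_sqrt_one_add_sq y).hasDerivWithinAt)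
    (strictMono_add_sqrt_one_add_sq.monotone.monotoneOn _) f).symm

theorem landenTransform_eq_add_reflect (f : ℝ → E) (y : ℝ) :
    landenTransform f y = (1 + y / √(1 + y ^ 2)) • f (y + √(1 + y ^ 2)) +
      (1 + -y / √(1 + (-y) ^ 2)) • f (-(-y + √(1 + (-y) ^ 2))) := by
  simp only [landenTransform, neg_sq, neg_add, neg_neg, neg_div, sub_eq_add_neg]

theorem integral_landenTransform {f : ℝ → E} (hf : Integrable f) :
    ∫ y, landenTransform f y = ∫ x, f x := by
  have hpos := (integrable_smul_comp_add_sqrt_iff f).2 hf.integrableOn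
  have hneg := (integrable_smul_comp_add_sqrt_iff (fun x ↦ f (-x))).2 hf.comp_neg.integrableOn
  calc ∫ y, landenTransform f y
      = (∫ x in Set.Ioi 0, f x) + ∫ x in Set.Ioi 0, f (-x) := by
        simp only [landenTransform_eq_add_reflect]
        rw [integral_add hpos hneg.comp_neg, integral_smul_comp_add_sqrt,
          integral_neg_eq_self (fun y ↦ (1 + y / √(1 + y ^ 2)) • f (-(y + √(1 + y ^ 2)))),
          integral_smul_comp_add_sqrt (fun x ↦ f (-x))]
    _ = (∫ x in Set.Iic 0, f x) + ∫ x in Set.Ioi 0, f x := by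
        rw [integral_comp_neg_Ioi, neg_zero, add_comm]
    _ = ∫ x, f x := intervalIntegral.integral_Iic_add_Ioi hf.integrableOn hf.integrableOn

end LandenTransform

theorem landenTransform_one_div_of_affine {D : ℝ → ℝ} {y a b : ℝ} (hD₀ : ∀ z, D z ≠ 0)
    (hD : ∀ z, z ^ 2 = 2 * y * z + 1 → D z = a * z + b) :
    landenTransform (fun x ↦ 1 / D x) y = 2 * b / (b ^ 2 + 2 * y * a * b - a ^ 2) := by
  set s := √(1 + y ^ 2) with hs
  have hs₀ : s ≠ 0 := by positivity
  have hs_sq : s ^ 2 = 1 + y ^ 2 := Real.sq_sqrt (by positivity)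
  have hplus : D (y + s) = a * (y + s) + b := hD _ (by linear_combination hs_sq)
  have hminus : D (y - s) = a * (y - s) + b := hD _ (by linear_combination hs_sq)
  have hplus₀ := hplus ▸ hD₀ (y + s)
  have hminus₀ := hminus ▸ hD₀ (y - s)
  have hnorm : b ^ 2 + 2 * y * a * b - a ^ 2 = (a * (y + s) + b) * (a * (y - s) + b) := by
    linear_combination a ^ 2 * hs_sq
  simp only [landenTransform, smul_eq_mul, ← hs]
  rw [hplus, hminus, hnorm]
  field_simp
  ring

theorem quartic_pos (x : ℝ) : 0 < x ^ 4 + 6 * x ^ 3 + 16 * x ^ 2 + 21 * x + 13 := by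
  calc 0 < (x ^ 2 + 3 * x + 7 / 2) ^ 2 + 3 / 4 := by positivity
    _ = x ^ 4 + 6 * x ^ 3 + 16 * x ^ 2 + 21 * x + 13 := by ring

theorem one_add_sq_le_mul_quartic (x : ℝ) :
    1 + x ^ 2 ≤ 10 * (x ^ 4 + 6 * x ^ 3 + 16 * x ^ 2 + 21 * x + 13) := by
  nlinarith [sq_nonneg (x ^ 2 + 3 * x + 5 / 2), sq_nonneg (x + 3 / 2)]

theorem integrable_one_div_quartic :
    Integrable (fun x : ℝ ↦ 1 / (x ^ 4 + 6 * x ^ 3 + 16 * x ^ 2 + 21 * x + 13)) := by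
  refine (integrable_inv_one_add_sq.const_mul 10).mono' ?_ (.of_forall fun x ↦ ?_)
  · exact (continuous_const.div (by fun_prop) fun x ↦ (quartic_pos x).ne').aestronglyMeasurable
  · have hD := quartic_pos x
    rw [Real.norm_of_nonneg (by positivity), ← div_eq_mul_inv, div_le_div_iff₀ hD (by positivity),
      one_mul]
    exact one_add_sq_le_mul_quartic x

theorem quartic_eq_affine_of_sq_eq {R : Type*} [CommRing R] {y z : R}
    (hz : z ^ 2 = 2 * y * z + 1) :
    z ^ 4 + 6 * z ^ 3 + 16 * z ^ 2 + 21 * z + 13 =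
      (8 * y ^ 3 + 24 * y ^ 2 + 36 * y + 27) * z + (4 * y ^ 2 + 12 * y + 30) := by
  have hz₃ : z ^ 3 = (4 * y ^ 2 + 1) * z + 2 * y := by linear_combination (z + 2 * y) * hz
  have hz₄ : z ^ 4 = (8 * y ^ 3 + 4 * y) * z + (4 * y ^ 2 + 1) := by
    linear_combination z * hz₃ + (4 * y ^ 2 + 1) * hz
  linear_combination hz₄ + 6 * hz₃ + 16 * hz

theorem landenTransform_one_div_quartic (y : ℝ) :
    landenTransform (fun x ↦ 1 / (x ^ 4 + 6 * x ^ 3 + 16 * x ^ 2 + 21 * x + 13)) y =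
      4 * (2 * y ^ 2 + 6 * y + 15) /
        (208 * y ^ 4 + 456 * y ^ 3 + 600 * y ^ 2 + 396 * y + 171) := by
  rw [landenTransform_one_div_of_affine (fun z ↦ (quartic_pos z).ne')
    fun z hz ↦ quartic_eq_affine_of_sq_eq hz]
  congr 1 <;> ring

theorem landen_step_one_invariance :
    ∫ x : ℝ, 4 * (2 * x ^ 2 + 6 * x + 15) /
        (208 * x ^ 4 + 456 * x ^ 3 + 600 * x ^ 2 + 396 * x + 171)
      = ∫ x : ℝ, 1 / (x ^ 4 + 6 * x ^ 3 + 16 * x ^ 2 + 21 * x + 13) := by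
  simp only [← landenTransform_one_div_quartic]
  exact integral_landenTransform integrable_one_div_quartic
end

section
/- For real numbers a, b > 0, define G(a,b) = ∫_{0}^{π/2} dθ / sqrt( a^2 * cos^2 θ + b^2 * sin^2 θ ). Then G(a, b) = G( (a+b)/2, sqrt(a*b) ). -/
open MeasureTheory Real intervalIntegral

/-- The elliptic integral `G(a,b) = ∫_0^{π/2} dθ / sqrt(a² cos² θ + b² sin² θ)`. -/
noncomputable def ellipticG (a b : ℝ) : ℝ :=
  ∫ θ in (0:ℝ)..(π / 2),
    1 / Real.sqrt (a ^ 2 * Real.cos θ ^ 2 + b ^ 2 * Real.sin θ ^ 2)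

/-!
Substituting `x = |b| tan θ` turns `2 G(a, b)` into the integral of
`1 / √((x ^ 2 + a ^ 2) * (x ^ 2 + b ^ 2))` over the real line. In this algebraic form the invariance
is Newman's substitution `t = (x - a * b / x) / 2`, which maps the half-line `0 < x` increasingly
onto the whole line: it carries the integrand of `((a + b) / 2, √(a * b))` in `t` to twice the
integrand of `(a, b)` in `x`.
-/

open Set

section ChangeOfVariables

variable {E : Type*} [NormedAddCommGroup E] [NormedSpace ℝ E]

theorem image_tan_Ioo_zero_pi_div_two : tan '' Ioo 0 (π / 2) = Ioi 0 := by
  refine Subset.antisymm ?_ fun x hx ↦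
    ⟨arctan x, ⟨arctan_pos.2 hx, arctan_lt_pi_div_two x⟩, tan_arctan x⟩
  rintro _ ⟨θ, ⟨hθ₀, hθ₁⟩, rfl⟩
  exact tan_pos_of_pos_of_lt_pi_div_two hθ₀ hθ₁

theorem integral_Ioi_zero_eq_integral_comp_tan (f : ℝ → E) :
    ∫ x in Ioi 0, f x = ∫ θ in Ioo 0 (π / 2), (1 / cos θ ^ 2) • f (tan θ) := by
  have hsub : Ioo 0 (π / 2) ⊆ Ioo (-(π / 2)) (π / 2) :=
    Ioo_subset_Ioo_left (by linarith [pi_pos])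
  rw [← image_tan_Ioo_zero_pi_div_two]
  exact integral_image_eq_integral_deriv_smul_of_monotoneOn measurableSet_Ioo
    (fun θ hθ ↦ (hasDerivAt_tan_of_mem_Ioo (hsub hθ)).hasDerivWithinAt)
    (strictMonoOn_tan.monotoneOn.mono hsub) f

variable {p q : ℝ}

theorem hasDerivAt_mul_sub_div (p q : ℝ) {x : ℝ} (hx : x ≠ 0) :
    HasDerivAt (fun x ↦ p * x - q / x) (p + q / x ^ 2) x := by
  refine (((hasDerivAt_id x).const_mul p).sub ((hasDerivAt_inv hx).const_mul q)).congr_deriv ?_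
  field_simp
  ring

theorem monotoneOn_mul_sub_div (hp : 0 ≤ p) (hq : 0 ≤ q) :
    MonotoneOn (fun x ↦ p * x - q / x) (Ioi 0) := by
  intro x hx y _ hxy
  have hx : 0 < x := hx
  dsimp only
  gcongr

theorem image_mul_sub_div_Ioi (hp : 0 < p) (hq : 0 < q) :
    (fun x ↦ p * x - q / x) '' Ioi 0 = univ := by
  refine eq_univ_of_forall fun y ↦ ?_
  set r := √(y ^ 2 + 4 * p * q)
  have hr : r ^ 2 = y ^ 2 + 4 * p * q := sq_sqrt (by positivity)
  have hroot : 0 < y + r := by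
    have : |y| < r := abs_lt_of_sq_lt_sq (by rw [hr]; linarith [mul_pos hp hq]) (sqrt_nonneg _)
    linarith [neg_abs_le y]
  -- the positive root of `p * x ^ 2 - y * x - q = 0`
  refine ⟨(y + r) / (2 * p), div_pos hroot (by positivity), ?_⟩
  field_simp
  linear_combination hr

/-- The Cauchy–Schlömilch substitution. -/
theorem integral_comp_mul_sub_div_Ioi (hp : 0 < p) (hq : 0 < q) (f : ℝ → E) :
    ∫ x in Ioi 0, (p + q / x ^ 2) • f (p * x - q / x) = ∫ t, f t := by
  rw [← setIntegral_univ (f := f), ← image_mul_sub_div_Ioi hp hq]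
  exact (integral_image_eq_integral_deriv_smul_of_monotoneOn measurableSet_Ioi
    (fun x hx ↦ (hasDerivAt_mul_sub_div p q (ne_of_gt hx)).hasDerivWithinAt)
    (monotoneOn_mul_sub_div hp.le hq.le) f).symm

end ChangeOfVariables

section EllipticIntegral

/-- The algebraic form of the integrand of `ellipticG a b`, in the variable `x = |b| tan θ`. -/
noncomputable def ellipticKernel (a b x : ℝ) : ℝ :=
  1 / √((x ^ 2 + a ^ 2) * (x ^ 2 + b ^ 2))

variable {a b : ℝ}

theorem ellipticKernel_abs (a b x : ℝ) : ellipticKernel a b |x| = ellipticKernel a b x := by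
  simp only [ellipticKernel, sq_abs]

theorem ellipticKernel_abs_mul_tan (a : ℝ) (hb : b ≠ 0) {θ : ℝ} (hθ : cos θ ≠ 0) :
    1 / cos θ ^ 2 * ellipticKernel a b (|b| * tan θ) =
      |b|⁻¹ * (1 / √(a ^ 2 * cos θ ^ 2 + b ^ 2 * sin θ ^ 2)) := by
  have hquartic : ((|b| * tan θ) ^ 2 + a ^ 2) * ((|b| * tan θ) ^ 2 + b ^ 2) =
      (|b| / cos θ ^ 2) ^ 2 * (a ^ 2 * cos θ ^ 2 + b ^ 2 * sin θ ^ 2) := by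
    rw [tan_eq_sin_div_cos, mul_pow, div_pow, div_pow, sq_abs]
    field_simp
    rw [sin_sq_add_cos_sq]
    ring
  rw [ellipticKernel, hquartic, sqrt_mul (sq_nonneg _), sqrt_sq (by positivity)]
  field_simp

theorem ellipticKernel_agm (hab : 0 < a * b) {x : ℝ} (hx : x ≠ 0) :
    (1 / 2 + a * b / 2 / x ^ 2) *
        ellipticKernel ((a + b) / 2) √(a * b) (1 / 2 * x - a * b / 2 / x) =
      2 * ellipticKernel a b x := by
  have hquartic : ((1 / 2 * x - a * b / 2 / x) ^ 2 + ((a + b) / 2) ^ 2) *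
      ((1 / 2 * x - a * b / 2 / x) ^ 2 + √(a * b) ^ 2) =
      ((x ^ 2 + a * b) / (4 * x ^ 2)) ^ 2 * ((x ^ 2 + a ^ 2) * (x ^ 2 + b ^ 2)) := by
    rw [sq_sqrt hab.le]
    field_simp
    ring
  rw [ellipticKernel, hquartic, sqrt_mul (sq_nonneg _), sqrt_sq (by positivity), ellipticKernel]
  have hsum : x ^ 2 + a * b ≠ 0 := by positivity
  field_simp [hsum]
  norm_num

theorem ellipticG_eq_integral_Ioi (a : ℝ) (hb : b ≠ 0) :
    ellipticG a b = ∫ x in Ioi 0, ellipticKernel a b x := by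
  have hb' : 0 < |b| := abs_pos.2 hb
  have hcos : ∀ θ ∈ Ioo 0 (π / 2), cos θ ≠ 0 := fun θ hθ ↦
    (cos_pos_of_mem_Ioo ⟨by linarith [hθ.1, pi_pos], hθ.2⟩).ne'
  refine mul_left_cancel₀ (inv_ne_zero hb'.ne') ?_
  calc |b|⁻¹ * ellipticG a b
      = ∫ θ in Ioo 0 (π / 2), |b|⁻¹ * (1 / √(a ^ 2 * cos θ ^ 2 + b ^ 2 * sin θ ^ 2)) := by
        rw [MeasureTheory.integral_const_mul, ellipticG, integral_of_le (by positivity),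
          integral_Ioc_eq_integral_Ioo]
    _ = ∫ θ in Ioo 0 (π / 2), 1 / cos θ ^ 2 * ellipticKernel a b (|b| * tan θ) :=
        setIntegral_congr_fun measurableSet_Ioo
          fun θ hθ ↦ (ellipticKernel_abs_mul_tan a hb (hcos θ hθ)).symm
    _ = ∫ x in Ioi 0, ellipticKernel a b (|b| * x) :=
        (integral_Ioi_zero_eq_integral_comp_tan fun x ↦ ellipticKernel a b (|b| * x)).symm
    _ = |b|⁻¹ * ∫ x in Ioi 0, ellipticKernel a b x := by
        rw [integral_comp_mul_left_Ioi _ _ hb', mul_zero, smul_eq_mul]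

theorem two_mul_ellipticG (a : ℝ) (hb : b ≠ 0) :
    2 * ellipticG a b = ∫ x, ellipticKernel a b x := by
  rw [ellipticG_eq_integral_Ioi a hb, ← integral_comp_abs]
  simp only [ellipticKernel_abs]

theorem ellipticG_agm_invariance_general (hab : 0 < a * b) :
    ellipticG a b = ellipticG ((a + b) / 2) √(a * b) := by
  refine mul_left_cancel₀ two_ne_zero ?_
  calc 2 * ellipticG a b
      = ∫ x in Ioi 0, 2 * ellipticKernel a b x := by
        rw [MeasureTheory.integral_const_mul,
          ellipticG_eq_integral_Ioi a (right_ne_zero_of_mul hab.ne')]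
    _ = ∫ x in Ioi 0, (1 / 2 + a * b / 2 / x ^ 2) *
          ellipticKernel ((a + b) / 2) √(a * b) (1 / 2 * x - a * b / 2 / x) :=
        setIntegral_congr_fun measurableSet_Ioi
          fun x hx ↦ (ellipticKernel_agm hab (ne_of_gt hx)).symm
    _ = ∫ t, ellipticKernel ((a + b) / 2) √(a * b) t :=
        integral_comp_mul_sub_div_Ioi one_half_pos (half_pos hab) _
    _ = 2 * ellipticG ((a + b) / 2) √(a * b) :=
        (two_mul_ellipticG _ (sqrt_ne_zero'.2 hab)).symm

end EllipticIntegral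

theorem ellipticG_agm_invariance (a b : ℝ) (ha : a > 0) (hb : b > 0) :
    ellipticG a b = ellipticG ((a + b) / 2) (Real.sqrt (a * b)) :=
  ellipticG_agm_invariance_general (mul_pos ha hb)
end
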